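/- arXiv:1401.4532 — 2 statements merged into one kernel-verified Lean document; each statement's English description precedes it below -/
import Mathlib

section
/- Monotonicity of the entropy gap to the Gaussian: for every α > 0 and all σ₁, σ₂ with 0 < σ₁ ≤ σ₂, (1/2)·log(2πeσ₁²) − h(α,σ₁) ≤ (1/2)·log(2πeσ₂²) − h(α,σ₂); in particular, with σ_b ≤ σ_e, the quantity ε_e − ε_b appearing in the secrecy-rate computation is nonnegative, where ε_b = (1/2)log(2πeσ_b²) − h(α,σ_b) and ε_e = (1/2)log(2πeσ_e²) − h(α,σ_e). -/
open MeasureTheory Real Filter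

/-- The Gaussian density with zero mean and standard deviation `σ`. -/
noncomputable def gaussDen (σ x : ℝ) : ℝ :=
  (Real.sqrt (2 * Real.pi * σ ^ 2))⁻¹ * Real.exp (-x ^ 2 / (2 * σ ^ 2))

/-- The `αℤ`-aliased Gaussian density `f_{σ,α}(x) = Σ_{k∈ℤ} g_σ(x − kα)`. -/
noncomputable def aliasedDen (σ α x : ℝ) : ℝ := ∑' k : ℤ, gaussDen σ (x - (k : ℝ) * α)

/-- The differential entropy `h(α,σ)` of the `αℤ`-aliased Gaussian noise
on the fundamental region `[0, α)`. -/
noncomputable def aliasedEnt (α σ : ℝ) : ℝ :=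
  -∫ x in Set.Ico (0 : ℝ) α, aliasedDen σ α x * Real.log (aliasedDen σ α x)

/-!
Write `γ_σ` for the centred Gaussian law and `η_σ = ∑ₖ 𝓝(kα, σ²)` for its `αℤ`-periodization,
with Lebesgue densities `g_σ` and `f_σ`. Since `log f_σ` is `α`-periodic, wrapping `γ_σ` onto
`[0, α)` gives `h(α, σ) = -∫ log f_σ dγ_σ`. The entropy gap is therefore
`-∫ log (g_σ / f_σ) dγ_σ`, that is, minus the relative entropy of `γ_σ` with respect to the infinite
measure `η_σ`. Convolution with `𝓝(0, σ₂² - σ₁²)` takes `γ_{σ₁}` to `γ_{σ₂}` and `η_{σ₁}` to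
`η_{σ₂}`, and by the data processing inequality it does not increase relative entropy.
-/

open ProbabilityTheory HurwitzZeta
open scoped NNReal

section DataProcessing

variable {E F : Type*} {mE : MeasurableSpace E} {mF : MeasurableSpace F}

theorem integral_log_nonpos_of_lintegral_le_one {P : Measure E} [IsProbabilityMeasure P]
    {R : E → ℝ} (hR : AEMeasurable R P) (hpos : ∀ᵐ x ∂P, 0 < R x)
    (hle : ∫⁻ x, ENNReal.ofReal (R x) ∂P ≤ 1) (hlog : Integrable (fun x ↦ log (R x)) P) :
    ∫ x, log (R x) ∂P ≤ 0 := by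
  have hnonneg : 0 ≤ᵐ[P] R := hpos.mono fun x hx ↦ hx.le
  have hint : Integrable R P :=
    (lintegral_ofReal_ne_top_iff_integrable hR.aestronglyMeasurable hnonneg).1
      (hle.trans_lt ENNReal.one_lt_top).ne
  have hmean : ∫ x, R x ∂P ≤ 1 := by
    rw [integral_eq_lintegral_of_nonneg_ae hnonneg hR.aestronglyMeasurable]
    exact ENNReal.toReal_mono ENNReal.one_ne_top hle
  calc ∫ x, log (R x) ∂P ≤ ∫ x, (R x - 1) ∂P :=
        integral_mono_ae hlog (hint.sub (integrable_const 1))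
          (hpos.mono fun x hx ↦ log_le_sub_one_of_pos hx)
    _ = ∫ x, R x ∂P - 1 := by rw [integral_sub hint (integrable_const 1)]; simp
    _ ≤ 0 := sub_nonpos.2 hmean

theorem ae_pos_of_eq_withDensity_ofReal {μ η : Measure E} {r : E → ℝ} (hr : Measurable r)
    (hμ : μ = η.withDensity fun x ↦ ENNReal.ofReal (r x)) : ∀ᵐ x ∂μ, 0 < r x := by
  rw [hμ, ae_withDensity_iff hr.ennreal_ofReal]
  exact ae_of_all _ fun x hx ↦ by simpa using hx

theorem lintegral_density_comp_div_density_le {μ η : Measure E} {f : E → F} (hf : Measurable f)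
    {r : E → ℝ} {ρ : F → ℝ} (hr : Measurable r) (hρ : Measurable ρ)
    (hμ : μ = η.withDensity fun x ↦ ENNReal.ofReal (r x))
    (hmap : μ.map f = (η.map f).withDensity fun y ↦ ENNReal.ofReal (ρ y)) :
    ∫⁻ x, ENNReal.ofReal (ρ (f x) / r x) ∂μ ≤ μ Set.univ := by
  have hcancel (x : E) :
      ENNReal.ofReal (r x) * ENNReal.ofReal (ρ (f x) / r x) ≤ ENNReal.ofReal (ρ (f x)) := by
    rcases le_or_gt (r x) 0 with hx | hx
    · simp [ENNReal.ofReal_of_nonpos hx]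
    · rw [← ENNReal.ofReal_mul hx.le, mul_div_cancel₀ _ hx.ne']
  calc ∫⁻ x, ENNReal.ofReal (ρ (f x) / r x) ∂μ
      = ∫⁻ x, ENNReal.ofReal (r x) * ENNReal.ofReal (ρ (f x) / r x) ∂η := by
        rw [hμ, lintegral_withDensity_eq_lintegral_mul _ hr.ennreal_ofReal (by fun_prop)]
        rfl
    _ ≤ ∫⁻ x, ENNReal.ofReal (ρ (f x)) ∂η := lintegral_mono hcancel
    _ = (μ.map f) Set.univ := by
        rw [hmap, withDensity_apply _ .univ, setLIntegral_univ, lintegral_map hρ.ennreal_ofReal hf]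
    _ = μ Set.univ := by rw [Measure.map_apply hf .univ, Set.preimage_univ]

-- The reference measure `η` may be infinite, so this is not an instance of
-- `InformationTheory.klDiv_map_le`.
theorem integral_log_density_map_le {μ η : Measure E} [IsProbabilityMeasure μ] {f : E → F}
    (hf : Measurable f) {r : E → ℝ} {ρ : F → ℝ} (hr : Measurable r) (hρ : Measurable ρ)
    (hμ : μ = η.withDensity fun x ↦ ENNReal.ofReal (r x))
    (hmap : μ.map f = (η.map f).withDensity fun y ↦ ENNReal.ofReal (ρ y))
    (hlog_r : Integrable (fun x ↦ log (r x)) μ)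
    (hlog_ρ : Integrable (fun y ↦ log (ρ y)) (μ.map f)) :
    ∫ y, log (ρ y) ∂(μ.map f) ≤ ∫ x, log (r x) ∂μ := by
  have hr_pos : ∀ᵐ x ∂μ, 0 < r x := ae_pos_of_eq_withDensity_ofReal hr hμ
  have hρ_pos : ∀ᵐ x ∂μ, 0 < ρ (f x) :=
    ae_of_ae_map hf.aemeasurable (ae_pos_of_eq_withDensity_ofReal hρ hmap)
  have hlog_ρf : Integrable (fun x ↦ log (ρ (f x))) μ := hlog_ρ.comp_measurable hf
  have hlog_div : (fun x ↦ log (ρ (f x) / r x)) =ᵐ[μ] fun x ↦ log (ρ (f x)) - log (r x) := by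
    filter_upwards [hr_pos, hρ_pos] with x hx hfx using log_div hfx.ne' hx.ne'
  have hgibbs : ∫ x, log (ρ (f x) / r x) ∂μ ≤ 0 :=
    integral_log_nonpos_of_lintegral_le_one ((hρ.comp hf).div hr).aemeasurable
      (by filter_upwards [hr_pos, hρ_pos] with x hx hfx using div_pos hfx hx)
      ((lintegral_density_comp_div_density_le hf hr hρ hμ hmap).trans_eq measure_univ)
      ((hlog_ρf.sub hlog_r).congr hlog_div.symm)
  rw [integral_congr_ae hlog_div, integral_sub hlog_ρf hlog_r] at hgibbs
  rw [integral_map hf.aemeasurable hlog_ρ.aestronglyMeasurable]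
  exact sub_nonpos.1 hgibbs

theorem integral_log_density_conv_le [AddMonoid E] [MeasurableAdd₂ E] {ν μ η : Measure E}
    [IsProbabilityMeasure ν] [IsProbabilityMeasure μ] [SFinite η] {r ρ : E → ℝ}
    (hr : Measurable r) (hρ : Measurable ρ)
    (hμ : μ = η.withDensity fun x ↦ ENNReal.ofReal (r x))
    (hconv : ν ∗ μ = (ν ∗ η).withDensity fun x ↦ ENNReal.ofReal (ρ x))
    (hlog_r : Integrable (fun x ↦ log (r x)) μ)
    (hlog_ρ : Integrable (fun x ↦ log (ρ x)) (ν ∗ μ)) :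
    ∫ x, log (ρ x) ∂(ν ∗ μ) ≤ ∫ x, log (r x) ∂μ := by
  have hprod : ν.prod μ = (ν.prod η).withDensity fun z ↦ ENNReal.ofReal (r z.2) := by
    rw [hμ, prod_withDensity_right hr.ennreal_ofReal]
  calc ∫ x, log (ρ x) ∂(ν ∗ μ) ≤ ∫ z : E × E, log (r z.2) ∂(ν.prod μ) :=
        integral_log_density_map_le measurable_add (hr.comp measurable_snd) hρ hprod hconv
          (hlog_r.comp_snd ν) hlog_ρ
    _ = ∫ x, log (r x) ∂μ := by
        rw [integral_fun_snd (f := fun x ↦ log (r x))]; simp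

end DataProcessing

theorem conv_sum {M ι : Type*} [AddMonoid M] [MeasurableSpace M] [MeasurableAdd₂ M] [Countable ι]
    (ν : Measure M) (μ : ι → Measure M) [∀ i, SFinite (μ i)] :
    ν ∗ Measure.sum μ = Measure.sum fun i ↦ ν ∗ μ i := by
  rw [Measure.conv, Measure.prod_sum_right, Measure.map_sum measurable_add.aemeasurable]
  rfl

section Wrapping

variable {G : Type*} [AddCommGroup G] [LinearOrder G] [IsOrderedAddMonoid G] [Archimedean G] {p : G}

theorem add_zsmul_mem_Ico_iff_toIcoDiv_eq_neg (hp : 0 < p) (a x : G) (k : ℤ) :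
    x + k • p ∈ Set.Ico a (a + p) ↔ toIcoDiv hp a x = -k := by
  rw [toIcoDiv_eq_iff, neg_smul, sub_neg_eq_add]

theorem preimage_toIcoMod_eq_iUnion (hp : 0 < p) (a : G) (s : Set G) :
    toIcoMod hp a ⁻¹' s = ⋃ k : ℤ, (· + k • p) ⁻¹' (s ∩ Set.Ico a (a + p)) := by
  ext x
  simp only [Set.mem_preimage, Set.mem_iUnion, Set.mem_inter_iff,
    add_zsmul_mem_Ico_iff_toIcoDiv_eq_neg hp]
  constructor
  · intro hx
    exact ⟨-toIcoDiv hp a x, by simpa [toIcoMod, sub_eq_add_neg] using hx, by simp⟩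
  · rintro ⟨k, hxk, hk⟩
    simpa [toIcoMod, hk] using hxk

theorem pairwise_disjoint_preimage_add_zsmul_inter_Ico (hp : 0 < p) (a : G) (s : Set G) :
    Pairwise (Function.onFun Disjoint
      fun k : ℤ ↦ (· + k • p) ⁻¹' (s ∩ Set.Ico a (a + p))) := by
  refine fun j k hjk ↦ Set.disjoint_left.2 fun x hj hk ↦ hjk ?_
  rw [← neg_inj, ← (add_zsmul_mem_Ico_iff_toIcoDiv_eq_neg hp a x j).1 hj.2,
    (add_zsmul_mem_Ico_iff_toIcoDiv_eq_neg hp a x k).1 hk.2]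

theorem measurable_toIcoMod {p : ℝ} (hp : 0 < p) (a : ℝ) : Measurable (toIcoMod hp a) := by
  have : toIcoMod hp a = fun x ↦ a + Int.fract ((x - a) / p) * p :=
    funext (toIcoMod_eq_add_fract_mul hp a)
  rw [this]
  fun_prop

theorem restrict_Ico_sum_map_add_zsmul (μ : Measure ℝ) {p : ℝ} (hp : 0 < p) (a : ℝ) :
    (Measure.sum fun k : ℤ ↦ μ.map (· + k • p)).restrict (Set.Ico a (a + p)) =
      μ.map (toIcoMod hp a) := by
  ext s hs
  have hsI : MeasurableSet (s ∩ Set.Ico a (a + p)) := hs.inter measurableSet_Ico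
  rw [Measure.restrict_apply hs, Measure.sum_apply _ hsI,
    Measure.map_apply (measurable_toIcoMod hp a) hs, preimage_toIcoMod_eq_iUnion,
    measure_iUnion (pairwise_disjoint_preimage_add_zsmul_inter_Ico hp a s)
      fun k ↦ measurable_add_const _ hsI]
  exact tsum_congr fun k ↦ Measure.map_apply (measurable_add_const _) hsI

theorem setIntegral_Ico_sum_map_add_zsmul {V : Type*} [NormedAddCommGroup V] [NormedSpace ℝ V]
    (μ : Measure ℝ) {p : ℝ} (hp : 0 < p) (a : ℝ) {φ : ℝ → V} (hφ : StronglyMeasurable φ)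
    (hper : Function.Periodic φ p) :
    ∫ x in Set.Ico a (a + p), φ x ∂(Measure.sum fun k : ℤ ↦ μ.map (· + k • p)) =
      ∫ x, φ x ∂μ := by
  rw [restrict_Ico_sum_map_add_zsmul μ hp a,
    integral_map (measurable_toIcoMod hp a).aemeasurable hφ.aestronglyMeasurable]
  refine integral_congr_ae (ae_of_all _ fun x ↦ ?_)
  simp only [toIcoMod, hper.sub_zsmul_eq]

end Wrapping

section GaussianDensity

theorem gaussDen_sub_eq_gaussianPDFReal (σ m x : ℝ) :
    gaussDen σ (x - m) = gaussianPDFReal m (σ ^ 2).toNNReal x := by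
  simp [gaussDen, gaussianPDFReal, coe_toNNReal _ (sq_nonneg σ)]

theorem measurable_gaussDen (σ : ℝ) : Measurable (gaussDen σ) := by
  unfold gaussDen
  fun_prop

variable {σ : ℝ}

theorem gaussDen_pos (hσ : σ ≠ 0) (x : ℝ) : 0 < gaussDen σ x := by
  unfold gaussDen
  positivity

theorem toNNReal_sq_ne_zero (hσ : σ ≠ 0) : (σ ^ 2).toNNReal ≠ 0 := by
  simpa using hσ

theorem gaussianReal_eq_withDensity_gaussDen (hσ : σ ≠ 0) (m : ℝ) :
    gaussianReal m (σ ^ 2).toNNReal =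
      volume.withDensity fun x ↦ ENNReal.ofReal (gaussDen σ (x - m)) := by
  simp only [gaussianReal_of_var_ne_zero _ (toNNReal_sq_ne_zero hσ), gaussianPDF_def,
    gaussDen_sub_eq_gaussianPDFReal]

theorem log_gaussDen (hσ : σ ≠ 0) (x : ℝ) :
    log (gaussDen σ x) = -(1 / 2) * log (2 * π * σ ^ 2) - x ^ 2 / (2 * σ ^ 2) := by
  rw [gaussDen, log_mul (by positivity) (exp_ne_zero _), log_inv, log_sqrt (by positivity), log_exp]
  ring

theorem integrable_sq_gaussianReal (m : ℝ) (v : ℝ≥0) :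
    Integrable (fun x ↦ x ^ 2) (gaussianReal m v) :=
  (memLp_id_gaussianReal 2).integrable_sq

theorem integral_sq_gaussianReal_zero (v : ℝ≥0) : ∫ x, x ^ 2 ∂(gaussianReal 0 v) = v := by
  have hvar := variance_fun_id_gaussianReal (μ := 0) (v := v)
  rwa [variance_of_integral_eq_zero (by fun_prop) (by simp)] at hvar

theorem integrable_log_gaussDen (hσ : σ ≠ 0) (m : ℝ) (v : ℝ≥0) :
    Integrable (fun x ↦ log (gaussDen σ x)) (gaussianReal m v) := by
  simp only [log_gaussDen hσ]
  exact (integrable_const _).sub ((integrable_sq_gaussianReal m v).div_const _)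

theorem integral_log_gaussDen (hσ : σ ≠ 0) :
    ∫ x, log (gaussDen σ x) ∂(gaussianReal 0 (σ ^ 2).toNNReal) =
      -(1 / 2 * log (2 * π * exp 1 * σ ^ 2)) := by
  have hlog : log (2 * π * exp 1 * σ ^ 2) = log (2 * π * σ ^ 2) + 1 := by
    rw [mul_right_comm, log_mul (by positivity) (exp_ne_zero _), log_exp]
  have hhalf : σ ^ 2 / (2 * σ ^ 2) = 1 / 2 := by field_simp
  simp only [log_gaussDen hσ]
  rw [integral_sub (integrable_const _) ((integrable_sq_gaussianReal _ _).div_const _),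
    integral_div, integral_sq_gaussianReal_zero, coe_toNNReal _ (sq_nonneg σ), integral_const,
    probReal_univ, one_smul, hhalf, hlog]
  ring

end GaussianDensity

section AliasedDensity

theorem continuous_evenKernel_coe {t : ℝ} (ht : 0 < t) :
    Continuous fun a : ℝ ↦ evenKernel a t := by
  refine Complex.continuous_re.comp (f := fun a : ℝ ↦ (evenKernel a t : ℂ)) ?_
  simp only [evenKernel_def]
  refine .mul (by fun_prop) (continuous_iff_continuousAt.2 fun a ↦ ?_)
  exact (continuousAt_jacobiTheta₂ (a * Complex.I * t) (by simpa)).comp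
    (f := fun a : ℝ ↦ (a * Complex.I * t, Complex.I * t)) (by fun_prop)

theorem periodic_aliasedDen (σ α : ℝ) : Function.Periodic (aliasedDen σ α) α := by
  intro x
  unfold aliasedDen
  rw [← (Equiv.addRight (1 : ℤ)).tsum_eq]
  refine tsum_congr fun k ↦ congrArg _ ?_
  simp only [Equiv.coe_addRight, Int.cast_add, Int.cast_one]
  ring

variable {σ α : ℝ}

theorem hasSum_gaussDen_sub_int_mul (hσ : σ ≠ 0) (hα : α ≠ 0) (x : ℝ) :
    HasSum (fun k : ℤ ↦ gaussDen σ (x - k * α))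
      ((√(2 * π * σ ^ 2))⁻¹ * evenKernel ↑(-x / α) (α ^ 2 / (2 * π * σ ^ 2))) := by
  have hexponent (k : ℤ) : -(x - k * α) ^ 2 / (2 * σ ^ 2) =
      -π * (k + -x / α) ^ 2 * (α ^ 2 / (2 * π * σ ^ 2)) := by
    field_simp
    ring
  simp only [gaussDen, hexponent]
  exact (hasSum_int_evenKernel _ (by positivity)).mul_left _

theorem continuous_aliasedDen (hσ : σ ≠ 0) (hα : α ≠ 0) : Continuous (aliasedDen σ α) := by
  have htheta : aliasedDen σ α = fun x ↦
      (√(2 * π * σ ^ 2))⁻¹ * evenKernel ↑(-x / α) (α ^ 2 / (2 * π * σ ^ 2)) :=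
    funext fun x ↦ (hasSum_gaussDen_sub_int_mul hσ hα x).tsum_eq
  rw [htheta]
  exact continuous_const.mul
    ((continuous_evenKernel_coe (by positivity)).comp (continuous_neg.div_const α))

theorem aliasedDen_pos (hσ : σ ≠ 0) (hα : α ≠ 0) (x : ℝ) : 0 < aliasedDen σ α x :=
  (hasSum_gaussDen_sub_int_mul hσ hα x).summable.tsum_pos (fun _ ↦ (gaussDen_pos hσ _).le) 0
    (gaussDen_pos hσ _)

theorem integrable_log_aliasedDen (hσ : σ ≠ 0) (hα : α ≠ 0) (μ : Measure ℝ) [IsFiniteMeasure μ] :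
    Integrable (fun x ↦ log (aliasedDen σ α x)) μ := by
  have hcont : Continuous fun x ↦ log (aliasedDen σ α x) :=
    (continuous_aliasedDen hσ hα).log fun x ↦ (aliasedDen_pos hσ hα x).ne'
  have hper : Function.Periodic (fun x ↦ log (aliasedDen σ α x)) α :=
    (periodic_aliasedDen σ α).comp log
  obtain ⟨C, hC⟩ := (hper.isBounded_of_continuous hα hcont).exists_norm_le
  exact .of_bound hcont.aestronglyMeasurable C
    (ae_of_all _ fun x ↦ hC _ (Set.mem_range_self x))

theorem measurable_gaussDen_div_aliasedDen (hσ : σ ≠ 0) (hα : α ≠ 0) :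
    Measurable fun x ↦ gaussDen σ x / aliasedDen σ α x :=
  (measurable_gaussDen σ).div (continuous_aliasedDen hσ hα).measurable

theorem log_gaussDen_div_aliasedDen (hσ : σ ≠ 0) (hα : α ≠ 0) (x : ℝ) :
    log (gaussDen σ x / aliasedDen σ α x) = log (gaussDen σ x) - log (aliasedDen σ α x) :=
  log_div (gaussDen_pos hσ x).ne' (aliasedDen_pos hσ hα x).ne'

theorem integrable_log_gaussDen_div_aliasedDen (hσ : σ ≠ 0) (hα : α ≠ 0) (m : ℝ) (v : ℝ≥0) :
    Integrable (fun x ↦ log (gaussDen σ x / aliasedDen σ α x)) (gaussianReal m v) := by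
  simp only [log_gaussDen_div_aliasedDen hσ hα]
  exact (integrable_log_gaussDen hσ m v).sub (integrable_log_aliasedDen hσ hα _)

end AliasedDensity

section AliasedGaussian

/-- The `αℤ`-periodization of the centred Gaussian law of variance `v`: the infinite measure
`∑ k : ℤ, 𝓝(kα, v)` on `ℝ`, the reference measure for the relative entropy of `𝓝(0, v)`. -/
noncomputable def aliasedGaussian (α : ℝ) (v : ℝ≥0) : Measure ℝ :=
  Measure.sum fun k : ℤ ↦ gaussianReal (k * α) v

instance (α : ℝ) (v : ℝ≥0) : SFinite (aliasedGaussian α v) := by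
  unfold aliasedGaussian
  infer_instance

theorem gaussianReal_conv_aliasedGaussian (α : ℝ) (w v : ℝ≥0) :
    gaussianReal 0 w ∗ aliasedGaussian α v = aliasedGaussian α (w + v) := by
  simp only [aliasedGaussian, conv_sum, gaussianReal_conv_gaussianReal, zero_add]

theorem aliasedGaussian_eq_sum_map_add_zsmul (α : ℝ) (v : ℝ≥0) :
    aliasedGaussian α v = Measure.sum fun k : ℤ ↦ (gaussianReal 0 v).map (· + k • α) := by
  simp only [aliasedGaussian, gaussianReal_map_add_const, zero_add, zsmul_eq_mul]

variable {σ α : ℝ}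

theorem aliasedGaussian_eq_withDensity_aliasedDen (hσ : σ ≠ 0) (hα : α ≠ 0) :
    aliasedGaussian α (σ ^ 2).toNNReal =
      volume.withDensity fun x ↦ ENNReal.ofReal (aliasedDen σ α x) := by
  have hsum : (fun x ↦ ENNReal.ofReal (aliasedDen σ α x)) =
      ∑' k : ℤ, fun x ↦ ENNReal.ofReal (gaussDen σ (x - k * α)) := by
    ext x
    rw [tsum_apply (Pi.summable.2 fun _ ↦ ENNReal.summable), aliasedDen,
      ENNReal.ofReal_tsum_of_nonneg (fun _ ↦ (gaussDen_pos hσ _).le)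
        (hasSum_gaussDen_sub_int_mul hσ hα x).summable]
  have hmeas (k : ℤ) : Measurable fun x ↦ ENNReal.ofReal (gaussDen σ (x - k * α)) :=
    ((measurable_gaussDen σ).comp (measurable_sub_const _)).ennreal_ofReal
  rw [hsum, withDensity_tsum hmeas, aliasedGaussian]
  simp only [gaussianReal_eq_withDensity_gaussDen hσ]

theorem gaussianReal_eq_withDensity_aliasedGaussian (hσ : σ ≠ 0) (hα : α ≠ 0) :
    gaussianReal 0 (σ ^ 2).toNNReal = (aliasedGaussian α (σ ^ 2).toNNReal).withDensity
      fun x ↦ ENNReal.ofReal (gaussDen σ x / aliasedDen σ α x) := by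
  rw [aliasedGaussian_eq_withDensity_aliasedDen hσ hα,
    ← withDensity_mul _ (continuous_aliasedDen hσ hα).measurable.ennreal_ofReal
      (measurable_gaussDen_div_aliasedDen hσ hα).ennreal_ofReal,
    gaussianReal_eq_withDensity_gaussDen hσ]
  congr 1 with x
  have hpos := aliasedDen_pos hσ hα x
  rw [sub_zero, Pi.mul_apply, ← ENNReal.ofReal_mul hpos.le, mul_div_cancel₀ _ hpos.ne']

theorem integral_log_aliasedDen (hσ : σ ≠ 0) (hα : 0 < α) :
    ∫ x, log (aliasedDen σ α x) ∂(gaussianReal 0 (σ ^ 2).toNNReal) = -aliasedEnt α σ := by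
  have hmeas := (continuous_aliasedDen hσ hα.ne').measurable
  have hper : Function.Periodic (fun x ↦ log (aliasedDen σ α x)) α :=
    (periodic_aliasedDen σ α).comp log
  calc ∫ x, log (aliasedDen σ α x) ∂(gaussianReal 0 (σ ^ 2).toNNReal)
      = ∫ x in Set.Ico 0 α, log (aliasedDen σ α x) ∂(aliasedGaussian α (σ ^ 2).toNNReal) := by
        rw [aliasedGaussian_eq_sum_map_add_zsmul]
        simpa using
          (setIntegral_Ico_sum_map_add_zsmul _ hα 0 hmeas.log.stronglyMeasurable hper).symm
    _ = ∫ x in Set.Ico 0 α, aliasedDen σ α x * log (aliasedDen σ α x) := by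
        rw [aliasedGaussian_eq_withDensity_aliasedDen hσ hα.ne',
          setIntegral_withDensity_eq_setIntegral_toReal_smul hmeas.ennreal_ofReal
            (ae_of_all _ fun _ ↦ ENNReal.ofReal_lt_top) _ measurableSet_Ico]
        simp only [ENNReal.toReal_ofReal (aliasedDen_pos hσ hα.ne' _).le, smul_eq_mul]
    _ = -aliasedEnt α σ := (neg_neg _).symm

theorem integral_log_gaussDen_div_aliasedDen (hσ : σ ≠ 0) (hα : 0 < α) :
    ∫ x, log (gaussDen σ x / aliasedDen σ α x) ∂(gaussianReal 0 (σ ^ 2).toNNReal) =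
      -(1 / 2 * log (2 * π * exp 1 * σ ^ 2) - aliasedEnt α σ) := by
  simp only [log_gaussDen_div_aliasedDen hσ hα.ne']
  rw [integral_sub (integrable_log_gaussDen hσ _ _) (integrable_log_aliasedDen hσ hα.ne' _),
    integral_log_gaussDen hσ, integral_log_aliasedDen hσ hα]
  ring

end AliasedGaussian

/-- monotonicity of the entropy gap to the Gaussian:
`(1/2)·log(2πeσ₁²) − h(α,σ₁) ≤ (1/2)·log(2πeσ₂²) − h(α,σ₂)` for `0 < σ₁ ≤ σ₂`;
in particular `ε_e − ε_b ≥ 0` when `σ_b ≤ σ_e`. -/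
theorem entropy_gap_mono_in_sigma (α σ₁ σ₂ : ℝ) (hα : 0 < α) (hσ₁ : 0 < σ₁)
    (h12 : σ₁ ≤ σ₂) :
    (1 / 2 : ℝ) * Real.log (2 * Real.pi * Real.exp 1 * σ₁ ^ 2) - aliasedEnt α σ₁ ≤
      (1 / 2 : ℝ) * Real.log (2 * Real.pi * Real.exp 1 * σ₂ ^ 2) - aliasedEnt α σ₂ := by
  have hσ₁_ne : σ₁ ≠ 0 := hσ₁.ne'
  have hσ₂_ne : σ₂ ≠ 0 := (hσ₁.trans_le h12).ne'
  set v₁ := (σ₁ ^ 2).toNNReal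
  set v₂ := (σ₂ ^ 2).toNNReal with hv₂
  set w := (σ₂ ^ 2 - σ₁ ^ 2).toNNReal
  have hvar : w + v₁ = v₂ := by
    rw [← toNNReal_add (sub_nonneg.2 (by gcongr)) (sq_nonneg σ₁), sub_add_cancel]
  have hconv : gaussianReal 0 w ∗ gaussianReal 0 v₁ = gaussianReal 0 v₂ := by
    rw [gaussianReal_conv_gaussianReal, hvar, zero_add]
  have hconv_aliased : gaussianReal 0 w ∗ aliasedGaussian α v₁ = aliasedGaussian α v₂ := by
    rw [gaussianReal_conv_aliasedGaussian, hvar]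
  have hprocessing := integral_log_density_conv_le
    (measurable_gaussDen_div_aliasedDen hσ₁_ne hα.ne')
    (measurable_gaussDen_div_aliasedDen hσ₂_ne hα.ne')
    (gaussianReal_eq_withDensity_aliasedGaussian hσ₁_ne hα.ne')
    (by rw [hconv, hconv_aliased, hv₂, gaussianReal_eq_withDensity_aliasedGaussian hσ₂_ne hα.ne'])
    (integrable_log_gaussDen_div_aliasedDen hσ₁_ne hα.ne' 0 v₁)
    (hconv ▸ integrable_log_gaussDen_div_aliasedDen hσ₂_ne hα.ne' 0 v₂)
  rw [hconv, integral_log_gaussDen_div_aliasedDen hσ₁_ne hα,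
    integral_log_gaussDen_div_aliasedDen hσ₂_ne hα] at hprocessing
  exact neg_le_neg_iff.1 hprocessing
end

section
/- Condition (ii) of the main theorem is achievable by taking enough levels: for every fixed σ > 0, the differential entropy of the aliased Gaussian noise converges to the differential entropy of the Gaussian as the lattice becomes coarse, i.e., lim_{α→∞} h(α,σ) = (1/2)·log(2πeσ²). -/
open MeasureTheory Real Filter

/-!
On the period `(-α/2, α/2]` the nearest lattice point is `0`, so for `α ≥ 1` every translate
`g(x - kα)` is at most `b k * g(x)` with `b` summable and independent of `α` and `x`. Hence the
aliased density `f` satisfies `g ≤ f ≤ C g` there, which bounds `|f log f|` by an integrable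
combination of `g` and `|g log g|`. Since `f → g` pointwise as `α → ∞`, dominated convergence
gives the entropy of `g`, which is computed from the variance.
-/

open ProbabilityTheory Set
open scoped Topology NNReal

/-- The periodization `x ↦ ∑ₖ f (x - k α)` of `f` along the lattice `αℤ`; it takes the junk
value `0` at points where the series diverges. -/
noncomputable def periodization (f : ℝ → ℝ) (α x : ℝ) : ℝ :=
  ∑' k : ℤ, f (x - k * α)

theorem periodic_periodization (f : ℝ → ℝ) (α : ℝ) :
    Function.Periodic (periodization f α) α := by
  intro x
  unfold periodization
  rw [← (Equiv.addRight (1 : ℤ)).tsum_eq]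
  congr! 3 with k
  rw [Equiv.coe_addRight, Int.cast_add, Int.cast_one]
  ring

theorem setIntegral_Ico_comp_periodization {E : Type*} [NormedAddCommGroup E] [NormedSpace ℝ E]
    (F : ℝ → E) (f : ℝ → ℝ) {α : ℝ} (hα : 0 ≤ α) :
    ∫ x in Ico 0 α, F (periodization f α x) =
      ∫ x in Ioc (-(α / 2)) (α / 2), F (periodization f α x) := by
  have shift_period :=
    ((periodic_periodization f α).comp F).intervalIntegral_add_eq 0 (-(α / 2))
  rw [zero_add, neg_add_eq_sub, sub_half] at shift_period
  rw [integral_Ico_eq_integral_Ioc, ← intervalIntegral.integral_of_le hα,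
    ← intervalIntegral.integral_of_le (by linarith)]
  exact shift_period

theorem abs_negMulLog_le_of_le_of_le_mul {a b C : ℝ} (ha : 0 ≤ a) (hab : a ≤ b) (hbC : b ≤ C * a) :
    |negMulLog b| ≤ C * (|negMulLog a| + |log C| * a) := by
  rcases ha.eq_or_lt with rfl | ha
  · obtain rfl : b = 0 := le_antisymm (by simpa using hbC) hab
    simp
  have hb : 0 < b := ha.trans_le hab
  have hC : 0 < C := pos_of_mul_pos_left (hb.trans_le hbC) ha.le
  have log_le : log b ≤ log C + log a := by
    rw [← log_mul hC.ne' ha.ne']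
    exact log_le_log hb hbC
  have abs_log_le : |log b| ≤ |log a| + |log C| := by
    rw [abs_le]
    constructor
    · linarith [log_le_log ha hab, neg_abs_le (log a), abs_nonneg (log C)]
    · linarith [le_abs_self (log a), le_abs_self (log C)]
  calc |negMulLog b| = b * |log b| := by rw [negMulLog, abs_mul, abs_neg, abs_of_pos hb]
    _ ≤ C * a * (|log a| + |log C|) := by gcongr
    _ = C * (|negMulLog a| + |log C| * a) := by
      rw [negMulLog, abs_mul, abs_neg, abs_of_pos ha]
      ring

section Domination

variable {f : ℝ → ℝ} {b : ℤ → ℝ}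

theorem summable_translates_of_le {α x : ℝ} (hf : ∀ y, 0 ≤ f y) (hb : Summable b)
    (hfb : ∀ k : ℤ, f (x - k * α) ≤ b k * f x) : Summable fun k : ℤ => f (x - k * α) :=
  (hb.mul_right (f x)).of_nonneg_of_le (fun _ => hf _) hfb

theorem le_periodization {α x : ℝ} (hf : ∀ y, 0 ≤ f y)
    (hs : Summable fun k : ℤ => f (x - k * α)) : f x ≤ periodization f α x := by
  simpa [periodization] using hs.le_tsum 0 fun _ _ => hf _

theorem periodization_le_tsum_mul {α x : ℝ} (hf : ∀ y, 0 ≤ f y) (hb : Summable b)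
    (hfb : ∀ k : ℤ, f (x - k * α) ≤ b k * f x) :
    periodization f α x ≤ (∑' k, b k) * f x := by
  rw [← tsum_mul_right]
  exact (summable_translates_of_le hf hb hfb).tsum_le_tsum hfb (hb.mul_right _)

theorem abs_negMulLog_periodization_le {α x : ℝ} (hf : ∀ y, 0 ≤ f y) (hb : Summable b)
    (hfb : ∀ k : ℤ, f (x - k * α) ≤ b k * f x) :
    |negMulLog (periodization f α x)| ≤
      (∑' k, b k) * (|negMulLog (f x)| + |log (∑' k, b k)| * f x) :=
  abs_negMulLog_le_of_le_of_le_mul (hf x)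
    (le_periodization hf (summable_translates_of_le hf hb hfb))
    (periodization_le_tsum_mul hf hb hfb)

theorem aestronglyMeasurable_periodization {α : ℝ} {s : Set ℝ} (hs : MeasurableSet s)
    (hf : AEStronglyMeasurable f) (hsum : ∀ x ∈ s, Summable fun k : ℤ => f (x - k * α)) :
    AEStronglyMeasurable (periodization f α) (volume.restrict s) := by
  refine aestronglyMeasurable_of_tendsto_ae atTop
    (f := fun (t : Finset ℤ) x => ∑ k ∈ t, f (x - k * α)) (fun t => ?_) ?_
  · refine Finset.aestronglyMeasurable_fun_sum t fun k _ => AEStronglyMeasurable.restrict ?_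
    exact hf.comp_quasiMeasurePreserving
      (measurePreserving_sub_right volume (k * α)).quasiMeasurePreserving
  · filter_upwards [ae_restrict_mem hs] with x hx using (hsum x hx).hasSum

theorem tendsto_sub_mul_atTop_cocompact (x : ℝ) {c : ℝ} (hc : c ≠ 0) :
    Tendsto (fun α => x - c * α) atTop (cocompact ℝ) :=
  (Homeomorph.subLeft x).isClosedEmbedding.tendsto_cocompact.comp <|
    (tendsto_cocompact_mul_left₀ hc).mono_left atTop_le_cocompact

theorem tendsto_periodization_atTop {x : ℝ} (hf : ∀ y, 0 ≤ f y)
    (hf_zero : Tendsto f (cocompact ℝ) (𝓝 0)) (hb : Summable b)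
    (hfb : ∀ᶠ α in atTop, ∀ k : ℤ, f (x - k * α) ≤ b k * f x) :
    Tendsto (fun α => periodization f α x) atTop (𝓝 (f x)) := by
  rw [← tsum_ite_eq (0 : ℤ) fun _ => f x]
  refine tendsto_tsum_of_dominated_convergence (hb.mul_right (f x)) (fun k => ?_) ?_
  · split_ifs with hk
    · simp [hk]
    · exact hf_zero.comp (tendsto_sub_mul_atTop_cocompact x (Int.cast_ne_zero.mpr hk))
  · filter_upwards [hfb] with α hα k
    rw [norm_of_nonneg (hf _)]
    exact hα k

theorem eventually_mem_Ioc_neg_half (x : ℝ) :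
    ∀ᶠ α : ℝ in atTop, x ∈ Ioc (-(α / 2)) (α / 2) := by
  filter_upwards [eventually_gt_atTop (2 * |x|)] with α hα
  obtain ⟨hneg, hpos⟩ := abs_lt.mp (show |x| < α / 2 by linarith)
  exact ⟨hneg, hpos.le⟩

theorem tendsto_setIntegral_Ioc_negMulLog_periodization
    (hf : ∀ y, 0 ≤ f y) (hf_int : Integrable f)
    (hf_ent : Integrable fun x => negMulLog (f x)) (hf_zero : Tendsto f (cocompact ℝ) (𝓝 0))
    (hb : Summable b) (hfb : ∀ᶠ α in atTop, ∀ x ∈ Ioc (-(α / 2)) (α / 2), ∀ k : ℤ,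
      f (x - k * α) ≤ b k * f x) :
    Tendsto (fun α => ∫ x in Ioc (-(α / 2)) (α / 2), negMulLog (periodization f α x)) atTop
      (𝓝 (∫ x, negMulLog (f x))) := by
  simp only [← integral_indicator measurableSet_Ioc]
  refine tendsto_integral_filter_of_dominated_convergence
    (fun x => |∑' k, b k| * (|negMulLog (f x)| + |log (∑' k, b k)| * f x)) ?_ ?_ ?_ ?_
  · filter_upwards [hfb] with α hα
    rw [aestronglyMeasurable_indicator_iff measurableSet_Ioc]
    exact continuous_negMulLog.comp_aestronglyMeasurable <|
      aestronglyMeasurable_periodization measurableSet_Ioc hf_int.aestronglyMeasurable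
        fun x hx => summable_translates_of_le hf hb (hα x hx)
  · filter_upwards [hfb] with α hα
    refine ae_of_all _ fun x => ?_
    have bound_nonneg := add_nonneg (abs_nonneg (negMulLog (f x)))
      (mul_nonneg (abs_nonneg (log (∑' k, b k))) (hf x))
    by_cases hx : x ∈ Ioc (-(α / 2)) (α / 2)
    · rw [indicator_of_mem hx, norm_eq_abs]
      exact (abs_negMulLog_periodization_le hf hb (hα x hx)).trans
        (mul_le_mul_of_nonneg_right (le_abs_self _) bound_nonneg)
    · rw [indicator_of_notMem hx, norm_zero]
      exact mul_nonneg (abs_nonneg _) bound_nonneg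
  · exact (hf_ent.abs.add (hf_int.const_mul _)).const_mul _
  · refine ae_of_all _ fun x => ?_
    have mem_window := eventually_mem_Ioc_neg_half x
    have pointwise : Tendsto (fun α => periodization f α x) atTop (𝓝 (f x)) :=
      tendsto_periodization_atTop hf hf_zero hb <|
        (hfb.and mem_window).mono fun α hα => hα.1 x hα.2
    refine ((continuous_negMulLog.tendsto (f x)).comp pointwise).congr' ?_
    filter_upwards [mem_window] with α hα
    rw [indicator_of_mem hα, Function.comp_apply]

theorem tendsto_setIntegral_Ico_negMulLog_periodization
    (hf : ∀ y, 0 ≤ f y) (hf_int : Integrable f)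
    (hf_ent : Integrable fun x => negMulLog (f x)) (hf_zero : Tendsto f (cocompact ℝ) (𝓝 0))
    (hb : Summable b) (hfb : ∀ᶠ α in atTop, ∀ x ∈ Ioc (-(α / 2)) (α / 2), ∀ k : ℤ,
      f (x - k * α) ≤ b k * f x) :
    Tendsto (fun α => ∫ x in Ico 0 α, negMulLog (periodization f α x)) atTop
      (𝓝 (∫ x, negMulLog (f x))) := by
  refine Tendsto.congr' ?_
    (tendsto_setIntegral_Ioc_negMulLog_periodization hf hf_int hf_ent hf_zero hb hfb)
  filter_upwards [eventually_ge_atTop 0] with α hα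
  exact (setIntegral_Ico_comp_periodization negMulLog f hα).symm

end Domination

section Gaussian

variable {μ : ℝ} {v : ℝ≥0}

theorem log_gaussianPDFReal (hv : v ≠ 0) (x : ℝ) :
    log (gaussianPDFReal μ v x) = -(log (2 * π * v) / 2 + (x - μ) ^ 2 / (2 * v)) := by
  rw [gaussianPDFReal, log_mul (by positivity) (exp_ne_zero _), log_exp, log_inv,
    log_sqrt (by positivity)]
  ring

theorem integrable_gaussianReal_iff {g : ℝ → ℝ} (hv : v ≠ 0) :
    Integrable g (gaussianReal μ v) ↔ Integrable fun x => gaussianPDFReal μ v x * g x := by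
  rw [gaussianReal_of_var_ne_zero μ hv, integrable_withDensity_iff_integrable_smul'
    (measurable_gaussianPDF μ v) (ae_of_all _ fun _ => gaussianPDF_lt_top)]
  simp only [toReal_gaussianPDF, smul_eq_mul]

theorem integrable_sub_sq_gaussianReal (μ : ℝ) (v : ℝ≥0) :
    Integrable (fun x => (x - μ) ^ 2) (gaussianReal μ v) :=
  ((memLp_id_gaussianReal 2).sub (memLp_const μ)).integrable_sq

theorem integral_sub_sq_gaussianReal (μ : ℝ) (v : ℝ≥0) :
    ∫ x, (x - μ) ^ 2 ∂gaussianReal μ v = v := by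
  rw [← variance_id_gaussianReal (μ := μ) (v := v), variance_eq_integral aemeasurable_id]
  simp only [id_eq, integral_id_gaussianReal]

theorem negMulLog_gaussianPDFReal (hv : v ≠ 0) (x : ℝ) :
    negMulLog (gaussianPDFReal μ v x) =
      gaussianPDFReal μ v x * (log (2 * π * v) / 2 + (x - μ) ^ 2 / (2 * v)) := by
  rw [negMulLog, log_gaussianPDFReal hv, neg_mul_neg]

theorem integrable_negMulLog_gaussianPDFReal (hv : v ≠ 0) :
    Integrable fun x => negMulLog (gaussianPDFReal μ v x) := by
  simp only [negMulLog_gaussianPDFReal hv]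
  rw [← integrable_gaussianReal_iff hv]
  exact (integrable_const _).add ((integrable_sub_sq_gaussianReal μ v).div_const _)

theorem integral_negMulLog_gaussianPDFReal (hv : v ≠ 0) :
    ∫ x, negMulLog (gaussianPDFReal μ v x) = 1 / 2 * log (2 * π * exp 1 * v) := by
  have integral_eq : ∫ x, negMulLog (gaussianPDFReal μ v x) = log (2 * π * v) / 2 + 1 / 2 := by
    calc ∫ x, negMulLog (gaussianPDFReal μ v x)
        = ∫ x, (log (2 * π * v) / 2 + (x - μ) ^ 2 / (2 * v)) ∂gaussianReal μ v := by
          simp only [negMulLog_gaussianPDFReal hv, integral_gaussianReal_eq_integral_smul hv,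
            smul_eq_mul]
      _ = log (2 * π * v) / 2 + v / (2 * v) := by
          rw [integral_add (integrable_const _)
            ((integrable_sub_sq_gaussianReal μ v).div_const _), integral_const, probReal_univ,
            one_smul, integral_div, integral_sub_sq_gaussianReal]
      _ = log (2 * π * v) / 2 + 1 / 2 := by field_simp
  rw [integral_eq, mul_right_comm _ (exp 1), log_mul (by positivity) (exp_ne_zero 1), log_exp]
  ring

theorem tendsto_gaussianPDFReal_cocompact (μ : ℝ) (v : ℝ≥0) :
    Tendsto (gaussianPDFReal μ v) (cocompact ℝ) (𝓝 0) := by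
  rcases eq_or_ne v 0 with rfl | hv
  · rw [gaussianPDFReal_zero_var]
    exact tendsto_const_nhds
  have centered : Tendsto (fun x => exp (-(1 / (2 * v)) * x ^ 2)) (cocompact ℝ) (𝓝 0) := by
    simpa using tendsto_rpow_abs_mul_exp_neg_mul_sq_cocompact (a := 1 / (2 * v)) (by positivity) 0
  have translated := (centered.comp
    (Homeomorph.subRight μ).isClosedEmbedding.tendsto_cocompact).const_mul (√(2 * π * v))⁻¹
  rw [mul_zero] at translated
  refine translated.congr fun x => ?_
  simp only [Function.comp_apply, Homeomorph.coe_subRight, gaussianPDFReal]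
  congr 2
  ring

theorem sq_add_abs_sub_one_le_sub_mul_sq {α x : ℝ} (hα : 1 ≤ α) (hx : |x| ≤ α / 2) (k : ℤ) :
    x ^ 2 + (|(k : ℝ)| - 1) ≤ (x - k * α) ^ 2 := by
  have abs_le_sq : |(k : ℝ)| ≤ |(k : ℝ)| ^ 2 := by
    exact_mod_cast Int.le_self_sq |k|
  have cross_le : k * x ≤ |(k : ℝ)| * (α / 2) :=
    calc k * x ≤ |(k : ℝ)| * |x| := (le_abs_self _).trans_eq (abs_mul _ _)
      _ ≤ |(k : ℝ)| * (α / 2) := by gcongr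
  have one_le_sq : 1 ≤ α ^ 2 := one_le_pow₀ hα
  calc x ^ 2 + (|(k : ℝ)| - 1)
      ≤ x ^ 2 + (|(k : ℝ)| ^ 2 - |(k : ℝ)|) := by linarith [sq_nonneg (|(k : ℝ)| - 1)]
    _ ≤ x ^ 2 + (|(k : ℝ)| ^ 2 - |(k : ℝ)|) * α ^ 2 := by
        gcongr
        exact le_mul_of_one_le_right (sub_nonneg.mpr abs_le_sq) one_le_sq
    _ = x ^ 2 - 2 * α * (|(k : ℝ)| * (α / 2)) + k ^ 2 * α ^ 2 := by rw [sq_abs]; ring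
    _ ≤ x ^ 2 - 2 * α * (k * x) + k ^ 2 * α ^ 2 := by gcongr
    _ = (x - k * α) ^ 2 := by ring

theorem gaussianPDFReal_sub_mul_le {α x : ℝ} (hα : 1 ≤ α) (hx : |x - μ| ≤ α / 2) (k : ℤ) :
    gaussianPDFReal μ v (x - k * α) ≤
      exp (-(|(k : ℝ)| - 1) / (2 * v)) * gaussianPDFReal μ v x := by
  rw [gaussianPDFReal, gaussianPDFReal, mul_left_comm, ← exp_add, ← add_div, sub_right_comm]
  gcongr
  linarith [sq_add_abs_sub_one_le_sub_mul_sq hα hx k]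

theorem summable_exp_neg_abs_sub_one_div {c : ℝ} (hc : 0 < c) :
    Summable fun k : ℤ => exp (-(|(k : ℝ)| - 1) / c) := by
  have nat_summable : Summable fun n : ℕ => exp (-((n : ℝ) - 1) / c) := by
    have geometric := (summable_exp_nat_mul_iff.mpr
      (show -(1 / c) < 0 by simpa using hc)).mul_left (exp (1 / c))
    refine geometric.congr fun n => ?_
    rw [← exp_add]
    congr 1
    ring
  refine Summable.of_nat_of_neg ?_ ?_ <;> simpa using nat_summable

end Gaussian

theorem gaussDen_eq_gaussianPDFReal (σ : ℝ) :
    gaussDen σ = gaussianPDFReal 0 (σ ^ 2).toNNReal := by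
  ext x
  rw [gaussDen, gaussianPDFReal, coe_toNNReal _ (sq_nonneg σ), sub_zero]

theorem aliasedEnt_eq_setIntegral_negMulLog (α σ : ℝ) :
    aliasedEnt α σ =
      ∫ x in Ico 0 α, negMulLog (periodization (gaussianPDFReal 0 (σ ^ 2).toNNReal) α x) := by
  rw [← gaussDen_eq_gaussianPDFReal, negMulLog_eq_neg, integral_neg]
  rfl

/-- condition (ii) of the main theorem is achievable by taking enough levels:
for fixed `σ > 0`, `h(α,σ) → (1/2)·log(2πeσ²)` as `α → ∞`. -/
theorem aliasedEnt_tendsto_gaussian_entropy (σ : ℝ) (hσ : 0 < σ) :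
    Filter.Tendsto (fun α : ℝ => aliasedEnt α σ) Filter.atTop
      (nhds ((1 / 2 : ℝ) * Real.log (2 * Real.pi * Real.exp 1 * σ ^ 2))) := by
  set v := (σ ^ 2).toNNReal with hv_def
  have hv : v ≠ 0 := (toNNReal_pos.mpr (by positivity)).ne'
  have limit_eq : (1 / 2 : ℝ) * log (2 * π * exp 1 * σ ^ 2) =
      ∫ x, negMulLog (gaussianPDFReal 0 v x) := by
    rw [integral_negMulLog_gaussianPDFReal hv, hv_def, coe_toNNReal _ (sq_nonneg σ)]
  have translates_le : ∀ᶠ α : ℝ in atTop, ∀ x ∈ Ioc (-(α / 2)) (α / 2), ∀ k : ℤ,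
      gaussianPDFReal 0 v (x - k * α) ≤
        exp (-(|(k : ℝ)| - 1) / (2 * v)) * gaussianPDFReal 0 v x := by
    filter_upwards [eventually_ge_atTop 1] with α hα x hx k
    exact gaussianPDFReal_sub_mul_le hα (by simpa using abs_le.mpr ⟨hx.1.le, hx.2⟩) k
  simp only [limit_eq, aliasedEnt_eq_setIntegral_negMulLog]
  exact tendsto_setIntegral_Ico_negMulLog_periodization (gaussianPDFReal_nonneg 0 v)
    (integrable_gaussianPDFReal 0 v) (integrable_negMulLog_gaussianPDFReal hv)
    (tendsto_gaussianPDFReal_cocompact 0 v) (summable_exp_neg_abs_sub_one_div (by positivity))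
    translates_le
end
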